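/- (Matrix-Tree Theorem for graphs) Let G be a finite simple undirected graph on n vertices with adjacency matrix A and diagonal degree matrix D, and set L = A − D. Then the number of spanning trees of G equals the absolute value of any cofactor of L. -/

import Mathlib

open scoped Classical

/-- The (i,j) cofactor of a square matrix. -/
noncomputable def cofactor {n : ℕ} (L : Matrix (Fin (n + 1)) (Fin (n + 1)) ℝ)
    (i j : Fin (n + 1)) : ℝ :=
  (-1 : ℝ) ^ ((i : ℕ) + (j : ℕ)) * (L.submatrix i.succAbove j.succAbove).det

namespace SimpleGraph

variable {V : Type*} [DecidableEq V] {r : V}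

/-- The self-map of `V` that follows the parent map `f` and fixes the root `r`. -/
def parentStep (f : {v : V // v ≠ r} → V) (v : V) : V :=
  if h : v ≠ r then f ⟨v, h⟩ else r

/-- Every vertex is led to the root by a parent map. -/
def ReachesRoot (f : {v : V // v ≠ r} → V) : Prop :=
  ∀ v, ∃ k, (parentStep f)^[k] v = r

/-- The graph joining each non-root vertex to its parent. -/
def parentGraph (f : {v : V // v ≠ r} → V) : SimpleGraph V :=
  fromRel fun a b => a ≠ r ∧ parentStep f a = b

/-- The matrix of a parent map, with root row and column removed. -/
def parentMatrix (f : {v : V // v ≠ r} → V) : Matrix {v : V // v ≠ r} {v : V // v ≠ r} ℝ :=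
  Matrix.of fun i j => if f i = j then 1 else 0

@[simp]
lemma parentStep_root (f : {v : V // v ≠ r} → V) : parentStep f r = r := by
  simp [parentStep]

@[simp]
lemma parentStep_coe (f : {v : V // v ≠ r} → V) (v : {v : V // v ≠ r}) :
    parentStep f v = f v := by
  simp [parentStep, v.2]

@[simp]
lemma parentStep_iterate_root (f : {v : V // v ≠ r} → V) (k : ℕ) :
    (parentStep f)^[k] r = r :=
  Function.iterate_fixed (parentStep_root f) k

lemma exists_iterate_parentStep_iff (f : {v : V // v ≠ r} → V) (v : V) :
    (∃ k, (parentStep f)^[k] (parentStep f v) = r) ↔ ∃ k, (parentStep f)^[k] v = r := by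
  constructor
  · rintro ⟨k, hk⟩
    exact ⟨k + 1, hk⟩
  · rintro ⟨k, hk⟩
    refine ⟨k, ?_⟩
    rw [← Function.iterate_succ_apply, Function.iterate_succ_apply', hk, parentStep_root]

lemma ReachesRoot.exists_uniform [Fintype V] {f : {v : V // v ≠ r} → V} (hf : ReachesRoot f) :
    ∃ k, ∀ v, (parentStep f)^[k] v = r := by
  choose d hd using hf
  refine ⟨Finset.univ.sup d, fun v => ?_⟩
  obtain ⟨m, hm⟩ := Nat.exists_eq_add_of_le' (Finset.le_sup (f := d) (Finset.mem_univ v))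
  rw [hm, Function.iterate_add_apply, hd, parentStep_iterate_root]

lemma parentStep_ne_of_iterate_eq_root {f : {v : V // v ≠ r} → V} {v w : V} (hv : v ≠ r)
    (hw : w ≠ r) (hvw : parentStep f v = w) {k : ℕ} (hk : (parentStep f)^[k] v = r) :
    parentStep f w ≠ v := by
  intro hwv
  have h : ∀ m, (parentStep f)^[m] v = v ∨ (parentStep f)^[m] v = w := by
    intro m
    induction m with
    | zero => simp
    | succ m ih =>
      rw [Function.iterate_succ_apply']
      rcases ih with ih | ih <;> simp [ih, hvw, hwv]
  rcases h k with h | h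
  · exact hv (h.symm.trans hk)
  · exact hw (h.symm.trans hk)

lemma parentGraph_adj {f : {v : V // v ≠ r} → V} {a b : V} :
    (parentGraph f).Adj a b ↔
      a ≠ b ∧ (a ≠ r ∧ parentStep f a = b ∨ b ≠ r ∧ parentStep f b = a) := by
  simp [parentGraph]

lemma parentGraph_le {G : SimpleGraph V} {f : {v : V // v ≠ r} → V}
    (hf : ∀ v : {v : V // v ≠ r}, G.Adj v (f v)) : parentGraph f ≤ G := by
  intro a b hab
  rcases (parentGraph_adj.1 hab).2 with ⟨ha, rfl⟩ | ⟨hb, rfl⟩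
  · simpa [parentStep, ha] using hf ⟨a, ha⟩
  · simpa [parentStep, hb] using (hf ⟨b, hb⟩).symm

lemma ReachesRoot.parentGraph_connected {f : {v : V // v ≠ r} → V} (hf : ReachesRoot f) :
    (parentGraph f).Connected := by
  have h : ∀ k v, (parentStep f)^[k] v = r → (parentGraph f).Reachable v r := by
    intro k
    induction k with
    | zero =>
      intro v hv
      obtain rfl : v = r := hv
      exact Reachable.refl _
    | succ k ih =>
      intro v hv
      refine Reachable.trans ?_ (ih _ hv)
      by_cases hvr : v = r
      · subst hvr; simp
      by_cases hvp : v = parentStep f v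
      · rw [← hvp]
      · exact (parentGraph_adj.2 ⟨hvp, Or.inl ⟨hvr, rfl⟩⟩).reachable
  have h' : ∀ v, (parentGraph f).Reachable v r := fun v => (hf v).elim fun k => h k v
  have : Nonempty V := ⟨r⟩
  exact ⟨fun a b => (h' a).trans (h' b).symm⟩

lemma ReachesRoot.parentGraph_isTree [Fintype V] {f : {v : V // v ≠ r} → V}
    (hf : ReachesRoot f) : (parentGraph f).IsTree := by
  have hc := hf.parentGraph_connected
  refine isTree_iff_connected_and_card.2 ⟨hc, le_antisymm ?_ hc.card_vert_le_card_edgeSet_add_one⟩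
  have hsub : (parentGraph f).edgeSet ⊆ Set.range fun v : {v : V // v ≠ r} => s(v.1, f v) := by
    intro e he
    induction e with
    | _ a b =>
      rw [mem_edgeSet, parentGraph_adj] at he
      rcases he.2 with ⟨ha, rfl⟩ | ⟨hb, rfl⟩
      · exact ⟨⟨a, ha⟩, by simp [parentStep, ha]⟩
      · exact ⟨⟨b, hb⟩, by simp [parentStep, hb, Sym2.eq_swap]⟩
  have hcard : Nat.card (parentGraph f).edgeSet ≤ Nat.card {v : V // v ≠ r} :=
    (Nat.card_mono (Set.finite_range _) hsub).trans (Finite.card_range_le _)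
  have hV : Nat.card {v : V // v ≠ r} + 1 = Nat.card V := by
    have : 0 < Fintype.card V := Fintype.card_pos_iff.2 ⟨r⟩
    simp only [Nat.card_eq_fintype_card, ne_eq, Fintype.card_subtype_compl,
      Fintype.card_unique]
    omega
  omega

lemma ReachesRoot.eq_of_parentGraph_eq {f g : {v : V // v ≠ r} → V} (hf : ReachesRoot f)
    (hfix : ∀ v, f v ≠ v) (hfg : parentGraph f = parentGraph g) : f = g := by
  have h : ∀ k v, (parentStep f)^[k] v = r → parentStep f v = parentStep g v := by
    intro k
    induction k with
    | zero =>
      intro v hv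
      obtain rfl : v = r := hv
      simp
    | succ k ih =>
      intro v hv
      by_cases hvr : v = r
      · subst hvr; simp
      have hne : v ≠ parentStep f v := by
        simpa [parentStep, hvr] using (hfix ⟨v, hvr⟩).symm
      have hadj : (parentGraph g).Adj v (parentStep f v) :=
        hfg ▸ parentGraph_adj.2 ⟨hne, Or.inl ⟨hvr, rfl⟩⟩
      rcases (parentGraph_adj.1 hadj).2 with ⟨-, h⟩ | ⟨hw, h⟩
      · exact h.symm
      · rw [← ih _ hv] at h
        exact absurd h (parentStep_ne_of_iterate_eq_root hvr hw rfl hv)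
  funext v
  obtain ⟨k, hk⟩ := hf v
  simpa using h k v hk

lemma IsTree.exists_parentGraph_eq {T : SimpleGraph V} (hT : T.IsTree) (r : V) :
    ∃ f : {v : V // v ≠ r} → V,
      (∀ v : {v : V // v ≠ r}, T.Adj v (f v)) ∧ ReachesRoot f ∧ parentGraph f = T := by
  have hstep : ∀ v : {v : V // v ≠ r}, ∃ w, T.Adj v w ∧ T.dist w r < T.dist v r := by
    rintro ⟨v, hv⟩
    obtain ⟨p, hp⟩ := hT.1.exists_walk_length_eq_dist v r
    cases p with
    | nil => exact absurd rfl hv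
    | cons h p =>
      refine ⟨_, h, (dist_le p).trans_lt ?_⟩
      rw [← hp, Walk.length_cons]
      exact Nat.lt_succ_self _
  choose f hadj hdist using hstep
  have hf : ReachesRoot f := by
    intro v
    induction hn : T.dist v r using Nat.strong_induction_on generalizing v with
    | _ n ih =>
      by_cases hv : v = r
      · exact ⟨0, hv⟩
      · rw [← exists_iterate_parentStep_iff]
        refine ih _ ?_ _ rfl
        simpa [parentStep, hv, ← hn] using hdist ⟨v, hv⟩
  refine ⟨f, hadj, hf, ?_⟩
  have hle := parentGraph_le hadj
  exact le_antisymm hle ((isTree_iff_minimal_connected.1 hT).2 hf.parentGraph_connected hle)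

variable [Fintype V]

lemma parentMatrix_pow_apply (f : {v : V // v ≠ r} → V) (k : ℕ) (i j : {v : V // v ≠ r}) :
    (parentMatrix f ^ k) i j = if (parentStep f)^[k] i = j then 1 else 0 := by
  induction k generalizing i with
  | zero =>
    rw [pow_zero, Matrix.one_apply, Function.iterate_zero_apply]
    simp only [Subtype.ext_iff]
  | succ k ih =>
    rw [pow_succ', Matrix.mul_apply]
    simp only [ih, Function.iterate_succ_apply, parentStep_coe]
    by_cases h : f i = r
    · rw [h, parentStep_iterate_root, if_neg j.2.symm]
      refine Finset.sum_eq_zero fun m _ => ?_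
      simp [parentMatrix, h, m.2.symm]
    · rw [Finset.sum_eq_single ⟨f i, h⟩]
      · simp [parentMatrix]
      · intro m _ hm
        have : f i ≠ m := fun h' => hm (Subtype.ext h'.symm)
        simp [parentMatrix, this]
      · simp

lemma ReachesRoot.det_one_sub_parentMatrix {f : {v : V // v ≠ r} → V} (hf : ReachesRoot f) :
    (1 - parentMatrix f).det = 1 := by
  obtain ⟨k, hk⟩ := hf.exists_uniform
  have hnil : IsNilpotent (parentMatrix f) := by
    refine ⟨k, ?_⟩
    ext i j
    rw [parentMatrix_pow_apply, hk, if_neg j.2.symm, Matrix.zero_apply]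
  have hchar := (Matrix.isNilpotent_charpoly_sub_pow_of_isNilpotent hnil).eq_zero
  have := congrArg (Polynomial.eval 1) (sub_eq_zero.1 hchar)
  simpa [Matrix.eval_charpoly] using this

lemma det_one_sub_parentMatrix_of_not_reachesRoot {f : {v : V // v ≠ r} → V}
    (hf : ¬ ReachesRoot f) : (1 - parentMatrix f).det = 0 := by
  classical
  let x : V → ℝ := fun v => if ∃ k, (parentStep f)^[k] v = r then 0 else 1
  have hxr : x r = 0 := if_pos ⟨0, rfl⟩
  obtain ⟨v, hv⟩ := not_forall.1 hf
  have hvr : v ≠ r := fun h => hv ⟨0, h⟩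
  refine Matrix.exists_mulVec_eq_zero_iff.1 ⟨fun i => x i, ?_, ?_⟩
  · intro h
    have := congrFun h ⟨v, hvr⟩
    simp [x, hv] at this
  · funext i
    have hx : x (f i) = x i := by
      have := exists_iterate_parentStep_iff f i
      rw [parentStep_coe] at this
      simp only [x, this]
    rw [Matrix.sub_mulVec, Matrix.one_mulVec, Pi.sub_apply, Pi.zero_apply, sub_eq_zero, ← hx]
    simp only [Matrix.mulVec, dotProduct, parentMatrix, Matrix.of_apply, ite_mul, one_mul,
      zero_mul]
    by_cases h : f i = r
    · rw [h, hxr]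
      exact (Finset.sum_eq_zero fun m _ => if_neg m.2.symm).symm
    · rw [Finset.sum_eq_single ⟨f i, h⟩]
      · simp
      · intro m _ hm
        exact if_neg fun h' => hm (Subtype.ext h'.symm)
      · simp

variable (G : SimpleGraph V) [DecidableRel G.Adj]

/-- The row of the reduced Laplacian at `i` is a sum over the possible parents of `i`. -/
lemma det_lapMatrix_submatrix_ne_eq_sum (r : V) :
    ((G.lapMatrix ℝ).submatrix (Subtype.val : {v : V // v ≠ r} → V) Subtype.val).det =
      ∑ f ∈ Fintype.piFinset fun i : {v : V // v ≠ r} => G.neighborFinset i,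
        (1 - parentMatrix f).det := by
  have h := (Matrix.detRowAlternating (n := {v : V // v ≠ r}) (R := ℝ)).toMultilinearMap
    |>.map_sum_finset
    (fun (i : {v : V // v ≠ r}) (w : V) (j : {v : V // v ≠ r}) =>
      (1 : Matrix {v : V // v ≠ r} {v : V // v ≠ r} ℝ) i j - if w = j then 1 else 0)
    (fun i => G.neighborFinset i)
  refine Eq.trans ?_ h
  change _ = Matrix.det _
  congr 1
  ext i j
  simp only [Finset.sum_apply, Finset.sum_sub_distrib, Finset.sum_const, Finset.sum_ite_eq',
    card_neighborFinset_eq_degree, mem_neighborFinset, Matrix.submatrix_apply, lapMatrix,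
    Matrix.sub_apply, degMatrix, Matrix.diagonal_apply, adjMatrix_apply, Matrix.one_apply,
    Subtype.ext_iff]
  split_ifs <;> simp

theorem det_lapMatrix_submatrix_ne [Fintype {T : SimpleGraph V // T ≤ G ∧ T.IsTree}] (r : V) :
    ((G.lapMatrix ℝ).submatrix (Subtype.val : {v : V // v ≠ r} → V) Subtype.val).det =
      Fintype.card {T : SimpleGraph V // T ≤ G ∧ T.IsTree} := by
  classical
  have hdet : ∀ f : {v : V // v ≠ r} → V,
      (1 - parentMatrix f).det = if ReachesRoot f then 1 else 0 := by
    intro f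
    split_ifs with hf
    · exact hf.det_one_sub_parentMatrix
    · exact det_one_sub_parentMatrix_of_not_reachesRoot hf
  simp only [det_lapMatrix_submatrix_ne_eq_sum, hdet, Finset.sum_boole]
  rw [← Finset.card_univ]
  congr 1
  have hmem : ∀ {f : {v : V // v ≠ r} → V},
      f ∈ (Fintype.piFinset fun i : {v : V // v ≠ r} => G.neighborFinset i).filter
        ReachesRoot ↔ (∀ i : {v : V // v ≠ r}, G.Adj i (f i)) ∧ ReachesRoot f := by
    simp
  refine Finset.card_bij
    (fun f hf => ⟨parentGraph f, parentGraph_le (hmem.1 hf).1, (hmem.1 hf).2.parentGraph_isTree⟩)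
    (fun _ _ => Finset.mem_univ _) ?_ ?_
  · intro f hf g _ hfg
    exact (hmem.1 hf).2.eq_of_parentGraph_eq (fun v => ((hmem.1 hf).1 v).ne')
      (congrArg Subtype.val hfg)
  · rintro ⟨T, hTG, hT⟩ -
    obtain ⟨f, hadj, hf, rfl⟩ := hT.exists_parentGraph_eq r
    exact ⟨f, hmem.2 ⟨fun i => hTG (hadj i), hf⟩, rfl⟩

end SimpleGraph

/-- For a matrix with zero column sums, the absolute value of a minor does not depend on which
row is deleted. -/
lemma Matrix.abs_det_submatrix_succAbove_eq {n : ℕ} (M : Matrix (Fin (n + 1)) (Fin (n + 1)) ℝ)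
    (hM : ∀ j, ∑ i, M i j = 0) (i i' j : Fin (n + 1)) :
    |(M.submatrix i.succAbove j.succAbove).det| =
      |(M.submatrix i'.succAbove j.succAbove).det| := by
  have h := Matrix.submatrix_succAbove_det_eq_negOnePow_submatrix_succAbove_det
    (M.submatrix id j.succAbove)
    (funext fun k => (Finset.sum_apply _ _ _).trans (hM (j.succAbove k))) i i'
  simp only [Matrix.submatrix_submatrix, Function.id_comp, Function.comp_id] at h
  rw [h]
  rcases Int.units_eq_one_or (Int.negOnePow ((i : ℤ) - i')) with hu | hu <;> simp [hu]

/-- Matrix-Tree theorem for graphs: the number of spanning trees of a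
finite simple graph `G` (subgraphs of `G` on the full vertex set that are trees) equals
the absolute value of any cofactor of `L = A - D`. -/
theorem matrix_tree_theorem_graph {n : ℕ} (G : SimpleGraph (Fin (n + 1)))
    [DecidableRel G.Adj]
    (L : Matrix (Fin (n + 1)) (Fin (n + 1)) ℝ)
    (hL : L = G.adjMatrix ℝ - Matrix.diagonal (fun i => (G.degree i : ℝ))) :
    ∀ i j,
      ((Finset.univ.filter
          (fun τ : SimpleGraph (Fin (n + 1)) => τ ≤ G ∧ τ.IsTree)).card : ℝ) =
        |cofactor L i j| := by
  subst hL
  intro i j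
  have hneg : G.adjMatrix ℝ - Matrix.diagonal (fun i => (G.degree i : ℝ)) = -G.lapMatrix ℝ := by
    simp [SimpleGraph.lapMatrix, SimpleGraph.degMatrix]
  have hsum : ∀ j, ∑ i, G.lapMatrix ℝ i j = 0 := by
    intro j
    have h := congrFun (G.lapMatrix_mulVec_const_eq_zero (R := ℝ)) j
    simp only [Matrix.mulVec, dotProduct, mul_one, Pi.zero_apply] at h
    rw [← h]
    exact Finset.sum_congr rfl fun i _ => (G.isSymm_lapMatrix (R := ℝ)).apply j i
  have hminor : ((G.lapMatrix ℝ).submatrix j.succAbove j.succAbove).det =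
      Fintype.card {T : SimpleGraph (Fin (n + 1)) // T ≤ G ∧ T.IsTree} := by
    rw [← G.det_lapMatrix_submatrix_ne j,
      ← Matrix.det_submatrix_equiv_self (finSuccAboveEquiv j)]
    rfl
  rw [cofactor, abs_mul, abs_pow, abs_neg, abs_one, one_pow, one_mul, hneg, Matrix.submatrix_neg,
    Pi.neg_apply, Pi.neg_apply, Matrix.det_neg, abs_mul, abs_pow, abs_neg, abs_one, one_pow,
    one_mul, Matrix.abs_det_submatrix_succAbove_eq _ hsum i j j, hminor, Nat.abs_cast,
    Fintype.card_subtype]
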